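/- For all n ≥ 3 and all natural numbers u, v, the number of π ∈ NC(n,3) with skip(π) = u and skew(π) = v equals the number of parallelogram polyominoes P ∈ PP(n−2,3) with area(P) = u and bounce(P) = v. (The pair (skip, skew) is a combinatorial interpretation of the q,t-Narayana polynomial N_{n,3}(q,t).) -/

import Mathlib

namespace QtN

/-! ### Lattice paths and parallelogram polyominoes -/

/-- A step of a lattice path: east or north. -/
inductive Step : Type
  | E : Step
  | N : Step
  deriving DecidableEq, Repr

/-- Number of east steps of a path. -/
def countE (w : List Step) : ℕ := w.count Step.E

/-- Number of north steps of a path. -/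
def countN (w : List Step) : ℕ := w.count Step.N

/-- Endpoint of a path started at the origin. -/
def pathPos (w : List Step) : ℕ × ℕ := (countE w, countN w)

/-- The set of lattice points visited by a path started at the origin. -/
def pathPts (w : List Step) : Finset (ℕ × ℕ) :=
  ((List.range (w.length + 1)).map (fun i => pathPos (w.take i))).toFinset

/-- `colHeightsAux w h`: for each east step of `w` (in order), the number of north
steps preceding it, starting with `h` north steps already performed. -/
def colHeightsAux : List Step → ℕ → List ℕ
  | [], _ => []
  | Step.E :: r, h => h :: colHeightsAux r h
  | Step.N :: r, h => colHeightsAux r (h + 1)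

/-- Height at which the path `w` crosses the vertical strip `i ≤ x ≤ i + 1`. -/
def colHeight (w : List Step) (i : ℕ) : ℕ := (colHeightsAux w 0).getD i 0

/-- A parallelogram polyomino of size `m × n`: a pair of monotone lattice paths from
`(0,0)` to `(m,n)` (east/north steps), the upper path staying weakly above the lower
path, and the two paths meeting only at `(0,0)` and `(m,n)`. -/
structure Polyomino (m n : ℕ) : Type where
  lower : List Step
  upper : List Step
  lowerE : countE lower = m
  lowerN : countN lower = n
  upperE : countE upper = m
  upperN : countN upper = n
  above : ∀ i < m, colHeight lower i ≤ colHeight upper i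
  meet : pathPts upper ∩ pathPts lower = {(0, 0), (m, n)}

/-- The area statistic: number of unit squares between the two paths,
minus `(m + n - 1)`. -/
def area {m n : ℕ} (P : Polyomino m n) : ℕ :=
  (∑ i ∈ Finset.range m, (colHeight P.upper i - colHeight P.lower i)) - (m + n - 1)

/-- Where an eastward run at height `y`, starting at `x`, first hits the lower path. -/
def eastTarget (hL : ℕ → ℕ) (m x y : ℕ) : ℕ :=
  ((List.range m).filter (fun i => decide (x ≤ i ∧ y ≤ hL i))).headD m

/-- Total bounce contribution: from state `(x, y)` just after the `j`-th east-to-north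
turn (counting the turns made so far), alternately go north until hitting the upper
path and east until hitting the lower path, each step contributing the number of
east-to-north turns preceding it. -/
def bounceAux (hU hL : ℕ → ℕ) (m n : ℕ) : ℕ → ℕ → ℕ → ℕ → ℕ
  | 0, _, _, _ => 0
  | fuel + 1, x, y, j =>
    if x = m ∧ y = n then 0
    else
      let y' := hU (x - 1)
      let x' := if y' = n then m else eastTarget hL m x y'
      (j + 1) * ((y' - y) + (x' - x)) + bounceAux hU hL m n fuel x' y' (j + 1)

/-- The bounce statistic of a parallelogram polyomino: the bounce path starts with a
single east step (contributing `0`) and then alternates north runs (to the ceiling)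
and east runs (to the floor); each step contributes the number of east-to-north turns
preceding it; finally `(m + n - 1)` is subtracted. -/
def bounce {m n : ℕ} (P : Polyomino m n) : ℕ :=
  bounceAux (colHeight P.upper) (colHeight P.lower) m n (m + n + 2) 1 0 0 - (m + n - 1)

/-! ### Set partitions and noncrossing partitions -/

/-- Maximum of a finite set of naturals (`0` for the empty set). -/
def fmax (β : Finset ℕ) : ℕ := β.sup id

/-- Minimum of a finite set of naturals (`0` for the empty set). -/
def fmin (β : Finset ℕ) : ℕ := if h : β.Nonempty then β.min' h else 0

/-- A set partition of `{1, …, n}`, given by its finite set of blocks. -/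
structure SetPartition (n : ℕ) : Type where
  blocks : Finset (Finset ℕ)
  not_empty_mem : ∅ ∉ blocks
  cover : ∀ i : ℕ, i ∈ Finset.Icc 1 n ↔ ∃ β ∈ blocks, i ∈ β
  disjoint : ∀ β ∈ blocks, ∀ γ ∈ blocks, β ≠ γ → Disjoint β γ

/-- A family of blocks is noncrossing if there are no `a < b < c < d` with
`a, c` in one block and `b, d` in a different block. -/
def IsNoncrossing (bs : Finset (Finset ℕ)) : Prop :=
  ∀ a b c d : ℕ, a < b → b < c → c < d →
    ∀ β ∈ bs, ∀ γ ∈ bs, a ∈ β → c ∈ β → b ∈ γ → d ∈ γ → β = γ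

/-- `NC n k`: noncrossing partitions of `{1, …, n}` with exactly `n - k + 1` blocks. -/
abbrev NC (n k : ℕ) : Type :=
  {P : SetPartition n // IsNoncrossing P.blocks ∧ P.blocks.card = n - k + 1}

/-- The skip statistic: `∑_{β} (max β - min β - |β| + 1)`. -/
def skip (bs : Finset (Finset ℕ)) : ℕ :=
  ∑ β ∈ bs, ((fmax β + 1 - fmin β) - β.card)

/-- The non-singleton blocks of a partition. -/
def nsBlocks (bs : Finset (Finset ℕ)) : Finset (Finset ℕ) :=
  bs.filter (fun β => 2 ≤ β.card)

/-- The block of `bs` containing `x` (junk if there is not exactly one). -/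
def blockContaining (bs : Finset (Finset ℕ)) (x : ℕ) : Finset ℕ :=
  (bs.filter (fun β => x ∈ β)).sup id

/-- For a noncrossing partition in `NC n 3`, the quadruple `(a, b, c, d)` describing its
non-singleton blocks: for two pair blocks `{a,b}` and `{c,d}` (with `a` the global
minimum) this is `(a, b, c, d)`; for a single triple block `{a, b, c}` (`a < b < c`)
this is `(a, b, b, c)`. -/
def blockQuad (bs : Finset (Finset ℕ)) : ℕ × ℕ × ℕ × ℕ :=
  let A := blockContaining (nsBlocks bs) (fmin ((nsBlocks bs).sup id))
  if (nsBlocks bs).card = 1 then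
    let l := A.sort (· ≤ ·)
    (l.getD 0 0, l.getD 1 0, l.getD 1 0, l.getD 2 0)
  else
    let B := ((nsBlocks bs).erase A).sup id
    (fmin A, fmax A, fmin B, fmax B)

/-- The leap statistic on `NC n 3`: `leap(ab|cd) = c - 2 + max(0, c - b)`,
and `leap({a,b,c}) = b - 2` (the case `b = c`). -/
def leap (bs : Finset (Finset ℕ)) : ℕ :=
  let (_, b, c, _) := blockQuad bs
  (c - 2) + (c - b)

/-- The skew statistic on `NC n 3`: `skew(ab|cd) = c - 2 + a` if `b < c`, else `c - 2`;
`skew({a,b,c}) = b - 2` (the case `b = c`). -/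
def skew (bs : Finset (Finset ℕ)) : ℕ :=
  let (a, b, c, _) := blockQuad bs
  if b < c then c - 2 + a else c - 2

/-- The mag statistic on `NC n 3`: `mag(ab|cd) = a + max(b, c) - 2 - ⌈(b - a)/2⌉`,
and `mag({a,b,c}) = a + b - 2 - ⌈(b - a)/2⌉` (the case `b = c`). -/
def mag (bs : Finset (Finset ℕ)) : ℕ :=
  let (a, b, c, _) := blockQuad bs
  a + max b c - 2 - (b - a + 1) / 2

/-- The area statistic on noncrossing partitions:
`area(π) = ∑_{β, β' ∈ π} #{ i ∈ β' : i < max β < max β' }` (ordered pairs of blocks). -/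
def ncArea (bs : Finset (Finset ℕ)) : ℕ :=
  ∑ β ∈ bs, ∑ γ ∈ bs, (γ.filter (fun i => i < fmax β ∧ fmax β < fmax γ)).card

/-- The elements of the non-singleton blocks, listed in increasing order, with
the middle element of a size-3 block listed twice. -/
def nsList (bs : Finset (Finset ℕ)) : List ℕ :=
  let l := ((nsBlocks bs).sup id).sort (· ≤ ·)
  if l.length = 3 then [l.getD 0 0, l.getD 1 0, l.getD 1 0, l.getD 2 0] else l

/-- The multiset of block sizes of a partition. -/
def blockSizes (bs : Finset (Finset ℕ)) : Multiset ℕ := bs.val.map Finset.card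

/-- The image of a partition of `{1, …, n}` under the flip `i ↦ n + 1 - i`. -/
def flipBlocks (n : ℕ) (bs : Finset (Finset ℕ)) : Finset (Finset ℕ) :=
  bs.image (fun β => β.image (fun i => n + 1 - i))

/-! ### The mingarc statistic -/

/-- The gaps `ν_r = m_{r+1} - m_r - 1` between consecutive block minima
`m_1 < ⋯ < m_h` (with `m_{h+1} = n + 1`). -/
def nuList (n : ℕ) (bs : Finset (Finset ℕ)) : List ℕ :=
  let ms := ((bs.image fmin).sort (· ≤ ·)) ++ [n + 1]
  (List.range (bs.image fmin).card).map (fun r => ms.getD (r + 1) 0 - ms.getD r 0 - 1)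

/-- Concatenation of `replicate ν c` over a list of pairs `(c, ν)`. -/
def repeatEach : List (ℕ × ℕ) → List ℕ
  | [] => []
  | p :: r => List.replicate p.2 p.1 ++ repeatEach r

/-- The right endpoints `y_1 ≤ ⋯ ≤ y_{k-1}`: each block maximum `c_r` repeated
`ν_r` times, in increasing order. -/
def ysList (n : ℕ) (bs : Finset (Finset ℕ)) : List ℕ :=
  repeatEach (List.zip ((bs.image fmax).sort (· ≤ ·)) (nuList n bs))

/-- The left endpoints `x_1 < ⋯ < x_{k-1}`: the elements of `{1, …, n}` that are not
block maxima, in increasing order. -/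
def xsList (n : ℕ) (bs : Finset (Finset ℕ)) : List ℕ :=
  ((Finset.Icc 1 n).filter (fun i => i ∉ bs.image fmax)).sort (· ≤ ·)

/-- Greedy left-to-right selection of arcs: keep the first arc, and thereafter keep the
earliest arc whose left endpoint exceeds the right endpoint of the last kept arc. -/
def greedyArcs : List (ℕ × ℕ) → Option ℕ → List (ℕ × ℕ)
  | [], _ => []
  | a :: rest, none => a :: greedyArcs rest (some a.2)
  | a :: rest, some r =>
      if r < a.1 then a :: greedyArcs rest (some a.2) else greedyArcs rest (some r)

/-- The mingarc statistic: the sum of `n - y_i` over the greedily selected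
candidate arcs `[x_i, y_i]`. -/
def mingarc (n : ℕ) (bs : Finset (Finset ℕ)) : ℕ :=
  ((greedyArcs (List.zip (xsList n bs) (ysList n bs)) none).map (fun p => n - p.2)).sum

/-! ### The map η from polyominoes to noncrossing partitions -/

/-- Largest column index `i < m` with `colHeight lower i ≤ j`: the rightmost cell
adjacent to the floor in row `j`. -/
def eFloor {m k : ℕ} (P : Polyomino m k) (j : ℕ) : ℕ :=
  (((List.range m).filter (fun i => decide (colHeight P.lower i ≤ j))).getLastD 0)

/-- Smallest column index `i` with `colHeight upper i ≥ j + 1`: the leftmost cell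
adjacent to the ceiling in row `j` (with default `m - 1`). -/
def fCeil {m k : ℕ} (P : Polyomino m k) (j : ℕ) : ℕ :=
  (((List.range m).filter (fun i => decide (j + 1 ≤ colHeight P.upper i))).headD (m - 1))

/-- The number of cells adjacent to the ceiling in row `j`. -/
def rowCount {m k : ℕ} (P : Polyomino m k) (j : ℕ) : ℕ :=
  fCeil P (j + 1) - fCeil P j + 1

/-- Pick, `cnt` times, the largest label in `{1, …, L}` not used yet. -/
def pickRow : ℕ → ℕ → Finset ℕ → Finset ℕ
  | 0, _, _ => ∅
  | cnt + 1, L, used =>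
      let x := fmax ((Finset.Icc 1 L) \ used)
      insert x (pickRow cnt L (insert x used))

/-- The blocks of `η(P)`: label the cells adjacent to the floor `1, …, n` going bottom
to top, left to right (the label of the floor cell in column `i`, row `j` is
`i + j + 1`, and the labels present in rows `≤ j` are exactly `1, …, eFloor P j + j + 1`);
then going bottom to top, left to right over the cells adjacent to the ceiling, assign
to each the largest unused indexing label occurring in the same row or below; the
blocks are the label sets of the ceiling rows. -/
def etaBlocks {m k : ℕ} (P : Polyomino m k) : Finset (Finset ℕ) :=
  (((List.range k).foldl
      (fun st j =>
        let B := pickRow (rowCount P j) (eFloor P j + j + 1) st.1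
        (st.1 ∪ B, B :: st.2))
      ((∅ : Finset ℕ), ([] : List (Finset ℕ)))).2).toFinset

/-!
A polyomino with three rows is determined by the columns `x₁ ≤ x₂` of the two inner north steps of
its floor and the columns `y₂ ≤ y₃` of the last two north steps of its ceiling. A noncrossing
partition with two arcs is determined by the endpoints of a pair of arcs, a triple `a < b < c` being
the pair `(a, c)`, `(b, b)`. In both codes the statistics are piecewise linear, and on four of
five classes an affine substitution matches them. In the remaining class, with bounce or skew equal
to `s`, either side splits into two ranges of parameters which the affine substitutions do not
match range by range. Indexing both sides by `(s, t, j)` with area or skip equal to `t + j`, the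
polyominoes switch from one range to the other at `t = j` and the partitions at `t = s - 1`, but
the set of indices is the same.
-/

section Paths

open Step

/-- The columns of the north steps of a path started in column `x`, in order. Together with the
number of east steps they determine the path. -/
def northCols : List Step → ℕ → List ℕ
  | [], _ => []
  | E :: w, x => northCols w (x + 1)
  | N :: w, x => x :: northCols w x

/-- The path from column `x` to column `m` with north steps in the given columns. -/
def pathOfCols (m : ℕ) : ℕ → List ℕ → List Step
  | x, [] => List.replicate (m - x) E
  | x, c :: cs => List.replicate (c - x) E ++ N :: pathOfCols m c cs

@[simp] lemma countE_cons_E (w : List Step) : countE (E :: w) = countE w + 1 := by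
  simp [countE]

@[simp] lemma countE_cons_N (w : List Step) : countE (N :: w) = countE w := by
  simp [countE]

@[simp] lemma countN_cons_E (w : List Step) : countN (E :: w) = countN w := by
  simp [countN]

@[simp] lemma countN_cons_N (w : List Step) : countN (N :: w) = countN w + 1 := by
  simp [countN]

lemma length_northCols (w : List Step) (x : ℕ) : (northCols w x).length = countN w := by
  induction w generalizing x with
  | nil => rfl
  | cons s w ih => cases s <;> simp [northCols, ih]

lemma mem_Icc_of_mem_northCols {w : List Step} {x c : ℕ} (hc : c ∈ northCols w x) :
    c ∈ Finset.Icc x (x + countE w) := by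
  induction w generalizing x with
  | nil => simp [northCols] at hc
  | cons s w ih =>
    rw [Finset.mem_Icc]
    cases s with
    | E =>
      have := Finset.mem_Icc.1 (ih hc)
      rw [countE_cons_E]
      lia
    | N =>
      rcases List.mem_cons.1 hc with rfl | hc
      · simp
      · simpa using ih hc

lemma pairwise_northCols (w : List Step) (x : ℕ) : (northCols w x).Pairwise (· ≤ ·) := by
  induction w generalizing x with
  | nil => exact .nil
  | cons s w ih =>
    cases s with
    | E => exact ih (x + 1)
    | N => exact (ih x).cons fun c hc => (Finset.mem_Icc.1 (mem_Icc_of_mem_northCols hc)).1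

lemma northCols_injective {w w' : List Step} {x : ℕ} (hE : countE w = countE w')
    (hN : northCols w x = northCols w' x) : w = w' := by
  have cols_E_ne_cons (w : List Step) (x : ℕ) (cs : List ℕ) : northCols w (x + 1) ≠ x :: cs := by
    intro h
    have hx : x ∈ northCols w (x + 1) := h ▸ List.mem_cons_self
    have := Finset.mem_Icc.1 (mem_Icc_of_mem_northCols hx)
    lia
  induction w generalizing w' x with
  | nil =>
    rcases w' with _ | ⟨_ | _, w'⟩
    · rfl
    · simp [countE] at hE
    · simp [northCols] at hN
  | cons s w ih =>
    rcases w' with _ | ⟨s', w'⟩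
    · cases s
      · simp [countE] at hE
      · simp [northCols] at hN
    · cases s <;> cases s' <;> simp only [northCols, countE_cons_E, countE_cons_N] at hE hN
      · rw [ih (Nat.add_right_cancel hE) hN]
      · exact absurd hN (cols_E_ne_cons _ _ _)
      · exact absurd hN.symm (cols_E_ne_cons _ _ _)
      · rw [ih hE (List.cons.inj hN).2]

lemma northCols_replicate_E_append (a : ℕ) (w : List Step) (x : ℕ) :
    northCols (List.replicate a E ++ w) x = northCols w (x + a) := by
  induction a generalizing x with
  | zero => rfl
  | succ a ih =>
    rw [List.replicate_succ, List.cons_append, northCols, ih, Nat.add_right_comm, Nat.add_assoc]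

lemma northCols_pathOfCols (m : ℕ) {x : ℕ} {cs : List ℕ} (h : (x :: cs).IsChain (· ≤ ·)) :
    northCols (pathOfCols m x cs) x = cs := by
  induction cs generalizing x with
  | nil => simpa [pathOfCols, northCols] using northCols_replicate_E_append (m - x) [] x
  | cons c cs ih =>
    rw [List.isChain_cons_cons] at h
    rw [pathOfCols, northCols_replicate_E_append, Nat.add_sub_of_le h.1, northCols, ih h.2]

lemma countE_pathOfCols {m x : ℕ} {cs : List ℕ} (h : (x :: cs).IsChain (· ≤ ·))
    (hm : ∀ c ∈ x :: cs, c ≤ m) : countE (pathOfCols m x cs) = m - x := by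
  induction cs generalizing x with
  | nil => simp [pathOfCols, countE]
  | cons c cs ih =>
    rw [List.isChain_cons_cons] at h
    have hc : c ≤ m := hm c (by simp)
    have hcs : countE (pathOfCols m c cs) = m - c :=
      ih h.2 fun d hd => hm d (List.mem_cons_of_mem _ hd)
    simp only [countE] at hcs
    simp only [countE, pathOfCols, List.count_append, List.count_replicate_self, ne_eq,
      reduceCtorEq, not_false_eq_true, List.count_cons_of_ne, hcs]
    lia

lemma countN_pathOfCols (m x : ℕ) (cs : List ℕ) : countN (pathOfCols m x cs) = cs.length := by
  induction cs generalizing x with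
  | nil => simp [pathOfCols, countN, List.count_replicate]
  | cons c cs ih =>
    have := ih c
    simp only [countN] at this
    simp [pathOfCols, countN, List.count_replicate, this]

lemma pathPts_cons (s : Step) (w : List Step) :
    pathPts (s :: w) = insert (0, 0) ((pathPts w).image (pathPos [s] + ·)) := by
  have pathPos_take_cons (i : ℕ) :
      pathPos ((s :: w).take (i + 1)) = pathPos [s] + pathPos (w.take i) := by
    cases s <;> simp [pathPos, countE, countN, add_comm]
  simp only [pathPts, List.toFinset, List.length_cons, List.range_succ_eq_map (n := w.length + 1)]
  ext p
  simp only [List.map_cons, List.map_map, Function.comp_def, pathPos_take_cons]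
  simp [pathPos, countE, countN, eq_comm]

lemma countP_northCols_eq_zero (w : List Step) {x : ℕ} {p : ℕ → Bool}
    (hp : ∀ c, x ≤ c → p c = false) : (northCols w x).countP p = 0 :=
  List.countP_eq_zero.2 fun c hc => by
    simp [hp c (Finset.mem_Icc.1 (mem_Icc_of_mem_northCols hc)).1]

lemma mem_pathPts_iff_countP (w : List Step) (x u y : ℕ) :
    (u, y) ∈ pathPts w ↔ u ≤ countE w ∧ (northCols w x).countP (· < x + u) ≤ y ∧
      y ≤ (northCols w x).countP (· ≤ x + u) := by
  induction w generalizing x u y with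
  | nil => simp [pathPts, pathPos, countE, countN, northCols]
  | cons s w ih =>
    rw [pathPts_cons]
    cases s with
    | E =>
      have pathPos_E : pathPos [E] = (1, 0) := rfl
      have none_below : (northCols w (x + 1)).countP (· ≤ x) = 0 :=
        countP_northCols_eq_zero w (by grind)
      have none_before : (northCols w (x + 1)).countP (· < x) = 0 :=
        countP_northCols_eq_zero w (by grind)
      cases u with
      | zero => simp [northCols, pathPos_E, none_below, none_before]
      | succ u =>
        simp [northCols, pathPos_E, ih (x + 1), Nat.add_right_comm x 1 u, Nat.add_assoc x u 1,
          Nat.add_comm 1]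
    | N =>
      have pathPos_N : pathPos [N] = (0, 1) := rfl
      cases u with
      | zero =>
        cases y <;> simp [northCols, pathPos_N, ih x, countP_northCols_eq_zero, Nat.add_comm 1]
      | succ u => cases y <;> simp [northCols, pathPos_N, ih x, Nat.add_comm 1]

lemma le_of_northCols_eq {w : List Step} {p q r : ℕ} (hw : northCols w 0 = [p, q, r]) :
    p ≤ q ∧ q ≤ r ∧ r ≤ countE w := by
  have sorted := pairwise_northCols w 0
  have hr := mem_Icc_of_mem_northCols (show r ∈ northCols w 0 by simp [hw])
  rw [hw] at sorted
  grind

lemma mem_pathPts_iff_of_northCols_eq {w : List Step} {p q r x y : ℕ}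
    (hw : northCols w 0 = [p, q, r]) :
    (x, y) ∈ pathPts w ↔ y = 0 ∧ x ≤ p ∨ y = 1 ∧ p ≤ x ∧ x ≤ q ∨ y = 2 ∧ q ≤ x ∧ x ≤ r ∨
      y = 3 ∧ r ≤ x ∧ x ≤ countE w := by
  have := le_of_northCols_eq hw
  rw [mem_pathPts_iff_countP w 0, hw]
  simp only [List.countP_cons, List.countP_nil, Nat.zero_add, decide_eq_true_eq]
  split_ifs <;> lia

lemma getD_colHeightsAux (w : List Step) (h x i : ℕ) (hi : i < countE w) :
    (colHeightsAux w h).getD i 0 = h + (northCols w x).countP (· ≤ x + i) := by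
  induction w generalizing h x i with
  | nil => simp [countE] at hi
  | cons s w ih =>
    cases s with
    | E =>
      rw [colHeightsAux, northCols]
      cases i with
      | zero =>
        rw [List.getD_cons_zero, countP_northCols_eq_zero w (by grind), Nat.add_zero]
      | succ i =>
        rw [List.getD_cons_succ, ih h (x + 1) i (by simpa using hi), Nat.add_right_comm x 1 i,
          Nat.add_assoc x i 1]
    | N =>
      rw [colHeightsAux, northCols, ih (h + 1) x i (by simpa using hi),
        List.countP_cons_of_pos (by simp), Nat.add_right_comm, Nat.add_assoc]

lemma colHeight_eq_countP {w : List Step} {i : ℕ} (hi : i < countE w) :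
    colHeight w i = (northCols w 0).countP (· ≤ i) := by
  simpa only [colHeight, Nat.zero_add] using getD_colHeightsAux w 0 0 i hi

lemma sum_range_countP_le {m : ℕ} (cs : List ℕ) :
    ∑ i ∈ Finset.range m, cs.countP (· ≤ i) = (cs.map (m - ·)).sum := by
  induction cs with
  | nil => simp
  | cons c cs ih =>
    have card_Ico : ((Finset.range m).filter (c ≤ ·)).card = m - c := by
      rw [← Nat.card_Ico]
      congr 1
      ext i
      simp [and_comm]
    simp [List.countP_cons, Finset.sum_add_distrib, ih, card_Ico, Finset.sum_boole, add_comm]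

lemma sum_colHeight (w : List Step) :
    ∑ i ∈ Finset.range (countE w), colHeight w i =
      ((northCols w 0).map (countE w - ·)).sum := by
  rw [← sum_range_countP_le]
  exact Finset.sum_congr rfl fun i hi => colHeight_eq_countP (Finset.mem_range.1 hi)

lemma eastTarget_eq_max {hL : ℕ → ℕ} {m x y c : ℕ} (hx : x ≤ m) (hc : c ≤ m)
    (h : ∀ i < m, y ≤ hL i ↔ c ≤ i) : eastTarget hL m x y = max x c := by
  obtain ⟨k, hk⟩ : ∃ k, m = max x c + k := Nat.exists_eq_add_of_le (max_le hx hc)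
  have filter_eq : (List.range m).filter (fun i => decide (x ≤ i ∧ y ≤ hL i)) =
      (List.range m).filter (max x c ≤ ·) :=
    List.filter_congr fun i hi => by simp [h i (List.mem_range.1 hi)]
  have no_smaller : (List.range (max x c)).filter (max x c ≤ ·) = [] := by
    simp only [List.filter_eq_nil_iff, List.mem_range, decide_eq_true_eq]
    lia
  rw [eastTarget, filter_eq]
  nth_rw 1 [hk]
  rw [List.range_add, List.filter_append, no_smaller, hk]
  cases k <;> simp [List.range_succ_eq_map]

end Paths

section Polyominoes

/-- Codes of the polyominoes of size `m × 3`: in `(x₁, x₂, y₂, y₃)` the north steps of the lower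
path are in columns `x₁, x₂, m` and those of the upper path in columns `0, y₂, y₃`. -/
def IsPolyominoCode (m : ℕ) : ℕ × ℕ × ℕ × ℕ → Prop
  | (x₁, x₂, y₂, y₃) => y₂ ≤ y₃ ∧ y₂ < x₁ ∧ x₁ ≤ x₂ ∧ y₃ < x₂ ∧ x₂ ≤ m

/-- The area statistic in terms of the code of a polyomino. -/
def codeArea : ℕ × ℕ × ℕ × ℕ → ℕ
  | (x₁, x₂, y₂, y₃) => x₁ + x₂ - y₂ - y₃ - 2

/-- The bounce statistic in terms of the code of a polyomino of size `m × 3`. -/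
def codeBounce (m : ℕ) : ℕ × ℕ × ℕ × ℕ → ℕ
  | (x₁, x₂, y₂, y₃) =>
    if y₂ = 0 then if y₃ = 0 then 0 else m + 1 - x₂
    else if y₃ < x₁ then m + 2 - x₁ else (m + 1 - x₁) + (m + 2 - x₂)

variable {m x₁ x₂ y₂ y₃ : ℕ}

lemma meet_eq_pair_iff_isPolyominoCode {l u : List Step} (lE : countE l = m) (uE : countE u = m)
    (hl : northCols l 0 = [x₁, x₂, m]) (hu : northCols u 0 = [0, y₂, y₃]) :
    pathPts u ∩ pathPts l = {(0, 0), (m, 3)} ↔ IsPolyominoCode m (x₁, x₂, y₂, y₃) := by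
  have := le_of_northCols_eq hl
  have := le_of_northCols_eq hu
  simp only [Finset.ext_iff, Prod.forall, Finset.mem_inter, Finset.mem_insert,
    Finset.mem_singleton, mem_pathPts_iff_of_northCols_eq hl, mem_pathPts_iff_of_northCols_eq hu,
    lE, uE, Prod.mk.injEq, IsPolyominoCode]
  constructor
  · intro meet
    have := meet 0 1
    have := meet x₁ 1
    have := meet x₂ 2
    lia
  · lia

/-- The polyomino with a given code. -/
def polyominoOfCode (h : IsPolyominoCode m (x₁, x₂, y₂, y₃)) : Polyomino m 3 :=
  have lower_chain : [0, x₁, x₂, m].IsChain (· ≤ ·) := by grind [IsPolyominoCode]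
  have upper_chain : [0, 0, y₂, y₃].IsChain (· ≤ ·) := by grind [IsPolyominoCode]
  have lowerE : countE (pathOfCols m 0 [x₁, x₂, m]) = m :=
    countE_pathOfCols lower_chain (by grind [IsPolyominoCode])
  have upperE : countE (pathOfCols m 0 [0, y₂, y₃]) = m :=
    countE_pathOfCols upper_chain (by grind [IsPolyominoCode])
  { lower := pathOfCols m 0 [x₁, x₂, m]
    upper := pathOfCols m 0 [0, y₂, y₃]
    lowerE
    lowerN := countN_pathOfCols _ _ _
    upperE
    upperN := countN_pathOfCols _ _ _
    above i hi := by
      rw [colHeight_eq_countP (lowerE.symm ▸ hi), colHeight_eq_countP (upperE.symm ▸ hi),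
        northCols_pathOfCols m lower_chain, northCols_pathOfCols m upper_chain]
      simp only [IsPolyominoCode] at h
      simp only [List.countP_cons, List.countP_nil, decide_eq_true_eq]
      split_ifs <;> lia
    meet := (meet_eq_pair_iff_isPolyominoCode lowerE upperE (northCols_pathOfCols m lower_chain)
      (northCols_pathOfCols m upper_chain)).2 h }

/-- `P.HasCode c` says that `c` is the code of the polyomino `P`. -/
def Polyomino.HasCode (P : Polyomino m 3) : ℕ × ℕ × ℕ × ℕ → Prop
  | (x₁, x₂, y₂, y₃) =>
    northCols P.lower 0 = [x₁, x₂, m] ∧ northCols P.upper 0 = [0, y₂, y₃]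

lemma hasCode_polyominoOfCode (h : IsPolyominoCode m (x₁, x₂, y₂, y₃)) :
    (polyominoOfCode h).HasCode (x₁, x₂, y₂, y₃) := by
  constructor <;> apply northCols_pathOfCols <;> grind [IsPolyominoCode]

lemma Polyomino.HasCode.isPolyominoCode {P : Polyomino m 3} (h : P.HasCode (x₁, x₂, y₂, y₃)) :
    IsPolyominoCode m (x₁, x₂, y₂, y₃) :=
  (meet_eq_pair_iff_isPolyominoCode P.lowerE P.upperE h.1 h.2).1 P.meet

lemma Polyomino.exists_hasCode (P : Polyomino m 3) : ∃ c, P.HasCode c := by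
  obtain ⟨p, q, r, hL⟩ : ∃ p q r, northCols P.lower 0 = [p, q, r] :=
    List.length_eq_three.1 ((length_northCols _ _).trans P.lowerN)
  obtain ⟨p', q', r', hU⟩ : ∃ p q r, northCols P.upper 0 = [p, q, r] :=
    List.length_eq_three.1 ((length_northCols _ _).trans P.upperN)
  have meet (x y : ℕ) : (x, y) ∈ pathPts P.upper ∧ (x, y) ∈ pathPts P.lower →
      (x, y) = (0, 0) ∨ (x, y) = (m, 3) := by
    rw [← Finset.mem_inter, P.meet, Finset.mem_insert, Finset.mem_singleton]
    exact id
  have above (i : ℕ) (hi : i < m) := by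
    simpa only [colHeight_eq_countP (P.lowerE.symm ▸ hi), colHeight_eq_countP (P.upperE.symm ▸ hi),
      hL, hU] using P.above i hi
  simp only [mem_pathPts_iff_of_northCols_eq hL, mem_pathPts_iff_of_northCols_eq hU,
    P.lowerE, P.upperE, Prod.mk.injEq] at meet
  have hr := P.lowerE ▸ le_of_northCols_eq hL
  have hr' := P.upperE ▸ le_of_northCols_eq hU
  have first_upper : p' = 0 := by
    have := above 0
    have := meet 1 0
    grind
  have last_lower : r = m := by
    have := above r
    have := meet r 3
    grind
  subst first_upper last_lower
  exact ⟨(p, q, q', r'), hL, hU⟩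

lemma Polyomino.HasCode.polyomino_unique {P Q : Polyomino m 3} {c : ℕ × ℕ × ℕ × ℕ}
    (hP : P.HasCode c) (hQ : Q.HasCode c) : P = Q := by
  have hl : P.lower = Q.lower :=
    northCols_injective (P.lowerE.trans Q.lowerE.symm) (hP.1.trans hQ.1.symm)
  have hu : P.upper = Q.upper :=
    northCols_injective (P.upperE.trans Q.upperE.symm) (hP.2.trans hQ.2.symm)
  cases P
  cases Q
  simp_all only

lemma Polyomino.HasCode.code_unique {P : Polyomino m 3} {c c' : ℕ × ℕ × ℕ × ℕ} (h : P.HasCode c)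
    (h' : P.HasCode c') : c = c' := by
  have hl := h.1.symm.trans h'.1
  have hu := h.2.symm.trans h'.2
  ext <;> simp_all

/-- Polyominoes of size `m × 3` are equivalent to their codes. -/
noncomputable def polyominoCodeEquiv (m : ℕ) :
    {c // IsPolyominoCode m c} ≃ Polyomino m 3 :=
  Equiv.ofBijective (fun c => polyominoOfCode c.2) <| by
    constructor
    · intro c c' (hcc' : polyominoOfCode c.2 = polyominoOfCode c'.2)
      have hc := hasCode_polyominoOfCode c.2
      rw [hcc'] at hc
      exact Subtype.ext (hc.code_unique (hasCode_polyominoOfCode c'.2))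
    · intro P
      obtain ⟨c, hc⟩ := P.exists_hasCode
      exact ⟨⟨c, hc.isPolyominoCode⟩, (hasCode_polyominoOfCode _).polyomino_unique hc⟩

lemma hasCode_polyominoCodeEquiv (c : {c // IsPolyominoCode m c}) :
    (polyominoCodeEquiv m c).HasCode c :=
  hasCode_polyominoOfCode c.2

lemma Polyomino.HasCode.area_eq {P : Polyomino m 3} (h : P.HasCode (x₁, x₂, y₂, y₃)) :
    area P = codeArea (x₁, x₂, y₂, y₃) := by
  have hc := h.isPolyominoCode
  have sum_lower := sum_colHeight P.lower
  have sum_upper := sum_colHeight P.upper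
  simp only [P.lowerE, P.upperE, h.1, h.2, List.map_cons, List.map_nil, List.sum_cons,
    List.sum_nil] at sum_lower sum_upper
  rw [area, Finset.sum_tsub_distrib _ fun i hi => P.above i (Finset.mem_range.1 hi)]
  simp only [IsPolyominoCode, codeArea] at hc ⊢
  lia

lemma bounceAux_of_ne {hU hL : ℕ → ℕ} {m n x y y' j : ℕ} (fuel : ℕ) (hy : y ≠ n)
    (hy' : hU (x - 1) = y') (hn : y' ≠ n) :
    bounceAux hU hL m n (fuel + 1) x y j =
      (j + 1) * ((y' - y) + (eastTarget hL m x y' - x)) +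
        bounceAux hU hL m n fuel (eastTarget hL m x y') y' (j + 1) := by
  simp [bounceAux, hy, hy', hn]

lemma bounceAux_of_eq {hU hL : ℕ → ℕ} {m n x y j : ℕ} (fuel : ℕ) (hy : y ≠ n)
    (hn : hU (x - 1) = n) :
    bounceAux hU hL m n (fuel + 1) x y j = (j + 1) * ((n - y) + (m - x)) := by
  cases fuel <;> simp [bounceAux, hy, hn]

lemma Polyomino.HasCode.bounce_eq {P : Polyomino m 3} (h : P.HasCode (x₁, x₂, y₂, y₃)) :
    bounce P = codeBounce m (x₁, x₂, y₂, y₃) := by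
  have hc := h.isPolyominoCode
  simp only [IsPolyominoCode] at hc
  have floor_one (x : ℕ) (hx : x ≤ m) : eastTarget (colHeight P.lower) m x 1 = max x x₁ :=
    eastTarget_eq_max hx (by lia) fun i hi => by
      rw [colHeight_eq_countP (P.lowerE.symm ▸ hi), h.1]
      grind
  have floor_two (x : ℕ) (hx : x ≤ m) : eastTarget (colHeight P.lower) m x 2 = max x x₂ :=
    eastTarget_eq_max hx (by lia) fun i hi => by
      rw [colHeight_eq_countP (P.lowerE.symm ▸ hi), h.1]
      grind
  have ceiling (i : ℕ) (hi : i < m) :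
      colHeight P.upper i = 1 + (if y₂ ≤ i then 1 else 0) + (if y₃ ≤ i then 1 else 0) := by
    rw [colHeight_eq_countP (P.upperE.symm ▸ hi), h.2]
    grind
  simp only [bounce, codeBounce]
  rcases Nat.eq_zero_or_pos y₂ with h₂ | h₂
  · rcases Nat.eq_zero_or_pos y₃ with h₃ | h₃
    · rw [bounceAux_of_eq _ (by simp) (by grind)]
      grind
    · rw [bounceAux_of_ne (y' := 2) _ (by simp) (by grind) (by simp), floor_two _ (by lia),
        max_eq_right (by lia), bounceAux_of_eq _ (by simp) (by grind)]
      grind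
  · rw [bounceAux_of_ne (y' := 1) _ (by simp) (by grind) (by simp), floor_one _ (by lia),
      max_eq_right (by lia)]
    rcases lt_or_ge y₃ x₁ with h₃ | h₃
    · rw [bounceAux_of_eq _ (by simp) (by grind)]
      grind
    · rw [bounceAux_of_ne (y' := 2) _ (by simp) (by grind) (by simp), floor_two _ (by lia),
        max_eq_right (by lia), bounceAux_of_eq _ (by simp) (by grind)]
      grind

end Polyominoes

section Cores

/-- The core of a set partition of `{1, …, n}` is its family of non-singleton blocks, which
determines it; `IsCore n F` says that `F` is such a family. -/
structure IsCore (n : ℕ) (F : Finset (Finset ℕ)) : Prop where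
  two_le_card : ∀ β ∈ F, 2 ≤ β.card
  subset_Icc : ∀ β ∈ F, β ⊆ Finset.Icc 1 n
  pairwiseDisjoint : (F : Set (Finset ℕ)).PairwiseDisjoint id

/-- The blocks of the set partition of `{1, …, n}` with core `F`. -/
def addSingletons (n : ℕ) (F : Finset (Finset ℕ)) : Finset (Finset ℕ) :=
  F ∪ (Finset.Icc 1 n \ F.biUnion id).image ({·})

variable {n : ℕ} {F : Finset (Finset ℕ)} {β : Finset ℕ}

lemma mem_addSingletons : β ∈ addSingletons n F ↔
    β ∈ F ∨ ∃ i ∈ Finset.Icc 1 n, (∀ γ ∈ F, i ∉ γ) ∧ {i} = β := by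
  simp only [addSingletons, Finset.mem_union, Finset.mem_image, Finset.mem_sdiff,
    Finset.mem_biUnion, id, not_exists, not_and, and_assoc]

lemma IsCore.disjoint_singletons (h : IsCore n F) (s : Finset ℕ) :
    Disjoint F (s.image ({·})) := by
  rw [Finset.disjoint_right]
  intro β hβ hF
  obtain ⟨i, -, rfl⟩ := Finset.mem_image.1 hβ
  simpa using h.two_le_card _ hF

lemma IsCore.nsBlocks_addSingletons (h : IsCore n F) : nsBlocks (addSingletons n F) = F := by
  ext β
  rw [nsBlocks, Finset.mem_filter, mem_addSingletons]
  constructor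
  · rintro ⟨hβ | ⟨i, -, -, rfl⟩, hcard⟩
    · exact hβ
    · simp at hcard
  · exact fun hβ => ⟨.inl hβ, h.two_le_card β hβ⟩

/-- The set partition with a given core. -/
def IsCore.setPartition (h : IsCore n F) : SetPartition n where
  blocks := addSingletons n F
  not_empty_mem := by
    rw [mem_addSingletons]
    rintro (hF | ⟨i, -, -, hi⟩)
    · simpa using h.two_le_card _ hF
    · exact Finset.singleton_ne_empty i hi
  cover i := by
    simp only [mem_addSingletons]
    constructor
    · intro hi
      by_cases hF : ∃ γ ∈ F, i ∈ γ
      · obtain ⟨γ, hγ, hiγ⟩ := hF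
        exact ⟨γ, .inl hγ, hiγ⟩
      · push Not at hF
        exact ⟨{i}, .inr ⟨i, hi, hF, rfl⟩, Finset.mem_singleton_self i⟩
    · rintro ⟨β, hβ | ⟨j, hj, -, rfl⟩, hiβ⟩
      · exact h.subset_Icc β hβ hiβ
      · rwa [Finset.mem_singleton.1 hiβ]
  disjoint β hβ γ hγ hne := by
    rw [mem_addSingletons] at hβ hγ
    rcases hβ with hβ | ⟨i, -, hi, rfl⟩ <;> rcases hγ with hγ | ⟨j, -, hj, rfl⟩
    · exact h.pairwiseDisjoint hβ hγ hne
    · exact Finset.disjoint_singleton_right.2 (hj β hβ)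
    · exact Finset.disjoint_singleton_left.2 (hi γ hγ)
    · exact Finset.disjoint_singleton.2 fun hij => hne (hij ▸ rfl)

lemma SetPartition.blocks_injective : Function.Injective (blocks (n := n)) := by
  rintro ⟨⟩ ⟨⟩ h
  congr

lemma SetPartition.isCore_nsBlocks (P : SetPartition n) : IsCore n (nsBlocks P.blocks) where
  two_le_card _ hβ := (Finset.mem_filter.1 hβ).2
  subset_Icc β hβ i hi := (P.cover i).2 ⟨β, (Finset.mem_filter.1 hβ).1, hi⟩
  pairwiseDisjoint β hβ γ hγ hne :=
    P.disjoint β (Finset.mem_filter.1 hβ).1 γ (Finset.mem_filter.1 hγ).1 hne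

lemma SetPartition.eq_singleton_of_notMem_nsBlocks (P : SetPartition n) {i : ℕ}
    (hβ : β ∈ P.blocks) (hns : β ∉ nsBlocks P.blocks) (hi : i ∈ β) : {i} = β := by
  have : β.card ≤ 1 := by simpa [nsBlocks, hβ, Nat.lt_succ_iff] using hns
  exact (Finset.card_le_one_iff_subset_singleton.1 this).elim fun j hj => by grind

lemma SetPartition.addSingletons_nsBlocks (P : SetPartition n) :
    addSingletons n (nsBlocks P.blocks) = P.blocks := by
  ext β
  rw [mem_addSingletons]
  constructor
  · rintro (hβ | ⟨i, hi, hns, rfl⟩)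
    · exact (Finset.mem_filter.1 hβ).1
    · obtain ⟨β, hβ, hiβ⟩ := (P.cover i).1 hi
      rwa [P.eq_singleton_of_notMem_nsBlocks hβ (fun h => hns β h hiβ) hiβ]
  · intro hβ
    by_cases hns : β ∈ nsBlocks P.blocks
    · exact .inl hns
    · obtain ⟨i, hi⟩ : β.Nonempty :=
        Finset.nonempty_iff_ne_empty.2 fun h => P.not_empty_mem (h ▸ hβ)
      refine .inr ⟨i, (P.cover i).2 ⟨β, hβ, hi⟩, fun γ hγ hiγ => ?_,
        P.eq_singleton_of_notMem_nsBlocks hβ hns hi⟩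
      have hne : β ≠ γ := fun h => hns (h ▸ hγ)
      exact Finset.disjoint_left.1 (P.disjoint β hβ γ (Finset.mem_filter.1 hγ).1 hne) hi hiγ

lemma isNoncrossing_addSingletons_iff : IsNoncrossing (addSingletons n F) ↔ IsNoncrossing F := by
  constructor
  · intro h a b c d hab hbc hcd β hβ γ hγ
    exact h a b c d hab hbc hcd β (mem_addSingletons.2 (.inl hβ)) γ (mem_addSingletons.2 (.inl hγ))
  · intro h a b c d hab hbc hcd β hβ γ hγ ha hc hb hd
    rcases mem_addSingletons.1 hβ with hβ | ⟨i, -, -, rfl⟩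
    · rcases mem_addSingletons.1 hγ with hγ | ⟨j, -, -, rfl⟩
      · exact h a b c d hab hbc hcd β hβ γ hγ ha hc hb hd
      · rw [Finset.mem_singleton] at hb hd
        lia
    · rw [Finset.mem_singleton] at ha hc
      lia

lemma IsCore.skip_addSingletons (h : IsCore n F) : skip (addSingletons n F) = skip F := by
  rw [skip, addSingletons, Finset.sum_union (h.disjoint_singletons _), skip, Nat.add_eq_left]
  refine Finset.sum_eq_zero fun β hβ => ?_
  obtain ⟨i, -, rfl⟩ := Finset.mem_image.1 hβ
  simp [fmax, fmin]

lemma IsCore.card_addSingletons_add (h : IsCore n F) :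
    (addSingletons n F).card + ∑ β ∈ F, (β.card - 1) = n := by
  have union_subset : F.biUnion id ⊆ Finset.Icc 1 n := Finset.biUnion_subset.2 h.subset_Icc
  have card_union : (F.biUnion id).card = ∑ β ∈ F, β.card :=
    Finset.card_biUnion h.pairwiseDisjoint
  have card_le := Finset.card_le_card union_subset
  have sum_sub : ∑ β ∈ F, (β.card - 1) + F.card = ∑ β ∈ F, β.card := by
    rw [Finset.card_eq_sum_ones, ← Finset.sum_add_distrib]
    exact Finset.sum_congr rfl fun β hβ =>
      Nat.sub_add_cancel (one_le_two.trans (h.two_le_card β hβ))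
  rw [addSingletons, Finset.card_union_of_disjoint (h.disjoint_singletons _),
    Finset.card_image_of_injective _ Finset.singleton_injective,
    Finset.card_sdiff_of_subset union_subset, Nat.card_Icc]
  rw [Nat.card_Icc] at card_le
  lia

lemma exists_triple_or_pairs_of_sum_eq_two (hF : ∀ β ∈ F, 2 ≤ β.card)
    (hsum : ∑ β ∈ F, (β.card - 1) = 2) :
    (∃ β, F = {β} ∧ β.card = 3) ∨ ∃ β γ, β ≠ γ ∧ F = {β, γ} ∧ β.card = 2 ∧ γ.card = 2 := by
  have card_le : F.card ≤ 2 := by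
    rw [← hsum, Finset.card_eq_sum_ones]
    exact Finset.sum_le_sum fun β hβ => Nat.le_sub_one_of_lt (hF β hβ)
  have nonempty : F.Nonempty := by
    rw [Finset.nonempty_iff_ne_empty]
    rintro rfl
    simp at hsum
  rcases card_le.lt_or_eq with hcard | hcard
  · have card_eq_one : F.card = 1 := Nat.le_antisymm (Nat.lt_succ_iff.1 hcard) nonempty.card_pos
    obtain ⟨β, rfl⟩ := Finset.card_eq_one.1 card_eq_one
    rw [Finset.sum_singleton] at hsum
    exact .inl ⟨β, rfl, by lia⟩
  · obtain ⟨β, γ, hne, rfl⟩ := Finset.card_eq_two.1 hcard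
    rw [Finset.sum_pair hne] at hsum
    have hβ := hF β (by simp)
    have hγ := hF γ (by simp)
    exact .inr ⟨β, γ, hne, rfl, by lia, by lia⟩

end Cores

section ArcCodes

/-- Codes of the elements of `NC n 3`: `(a, b, c, d)` stands for the nonsingleton blocks `{a, b}`
and `{c, d}` when `c < d`, and for the triple `{a, c, b}` when `c = d`. A triple is thus treated as
an arc `ab` above a degenerate nested arc `cc`. -/
def IsArcCode (n : ℕ) : ℕ × ℕ × ℕ × ℕ → Prop
  | (a, b, c, d) => 1 ≤ a ∧ a < b ∧ a < c ∧ b ≤ n ∧ d ≤ n ∧ (b < c ∧ c < d ∨ c ≤ d ∧ d < b)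

/-- The core of the noncrossing partition with a given code. -/
def coreOfArcs : ℕ × ℕ × ℕ × ℕ → Finset (Finset ℕ)
  | (a, b, c, d) => if c = d then {{a, c, b}} else {{a, b}, {c, d}}

/-- The skip statistic in terms of the code of a noncrossing partition. -/
def arcSkip : ℕ × ℕ × ℕ × ℕ → ℕ
  | (a, b, c, d) => (b - a) + (d - c) - 2

/-- The skew statistic in terms of the code of a noncrossing partition. -/
def arcSkew : ℕ × ℕ × ℕ × ℕ → ℕ
  | (a, b, c, _) => if b < c then c - 2 + a else c - 2

lemma fmin_eq_of_isLeast {β : Finset ℕ} {a : ℕ} (h : IsLeast (β : Set ℕ) a) : fmin β = a := by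
  rw [fmin, dif_pos ⟨a, h.1⟩]
  exact (β.isLeast_min' ⟨a, h.1⟩).unique h

lemma fmax_eq_of_isGreatest {β : Finset ℕ} {a : ℕ} (h : IsGreatest (β : Set ℕ) a) : fmax β = a :=
  le_antisymm (Finset.sup_le fun _ hb => h.2 hb) (Finset.le_sup (f := id) h.1)

variable {n a b c d : ℕ}

lemma fmin_pair (hab : a < b) : fmin {a, b} = a :=
  fmin_eq_of_isLeast ⟨by simp, by simp [lowerBounds, hab.le]⟩

lemma fmax_pair (hab : a < b) : fmax {a, b} = b :=
  fmax_eq_of_isGreatest ⟨by simp, by simp [upperBounds, hab.le]⟩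

lemma fmin_triple (hab : a < b) (hbc : b < c) : fmin {a, b, c} = a :=
  fmin_eq_of_isLeast ⟨by simp, by simp [lowerBounds, hab.le, (hab.trans hbc).le]⟩

lemma fmax_triple (hab : a < b) (hbc : b < c) : fmax {a, b, c} = c :=
  fmax_eq_of_isGreatest ⟨by simp, by simp [upperBounds, hbc.le, (hab.trans hbc).le]⟩

lemma card_triple (hab : a < b) (hbc : b < c) : ({a, b, c} : Finset ℕ).card = 3 :=
  Finset.card_eq_three.2 ⟨a, b, c, hab.ne, (hab.trans hbc).ne, hbc.ne, rfl⟩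

lemma pair_ne_pair (hab : a < b) (hac : a < c) (hcd : c < d) : ({a, b} : Finset ℕ) ≠ {c, d} :=
  fun h => hac.ne (by rw [← fmin_pair hab, h, fmin_pair hcd])

lemma blockQuad_of_nsBlocks_eq_triple {bs : Finset (Finset ℕ)} (hab : a < b) (hbc : b < c)
    (h : nsBlocks bs = {{a, b, c}}) : blockQuad bs = (a, b, b, c) := by
  have sort_triple : ({a, b, c} : Finset ℕ).sort (· ≤ ·) = [a, b, c] := by
    have := (List.toFinset_sort (· ≤ ·) (l := [a, b, c]) (by grind)).2 (by grind)
    simpa using this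
  simp [blockQuad, h, blockContaining, fmin_triple hab hbc, Finset.filter_singleton, sort_triple]

lemma blockQuad_of_nsBlocks_eq_pairs {bs : Finset (Finset ℕ)} (hab : a < b) (hac : a < c)
    (hcd : c < d) (h : nsBlocks bs = {{a, b}, {c, d}}) : blockQuad bs = (a, b, c, d) := by
  have hne := pair_ne_pair hab hac hcd
  have fmin_union : fmin ({a, b} ∪ {c, d}) = a :=
    fmin_eq_of_isLeast ⟨by simp, fun x hx => by
      simp only [Finset.coe_union, Finset.coe_pair, Set.mem_union, Set.mem_insert_iff,
        Set.mem_singleton_iff] at hx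
      lia⟩
  have block_a : blockContaining {{a, b}, {c, d}} a = {a, b} := by
    have : ({{a, b}, {c, d}} : Finset (Finset ℕ)).filter (a ∈ ·) = {{a, b}} := by grind
    simp [blockContaining, this]
  have sup_pairs : ({{a, b}, {c, d}} : Finset (Finset ℕ)).sup id = {a, b} ∪ {c, d} :=
    by rw [Finset.sup_insert, Finset.sup_singleton, id, id, Finset.sup_eq_union]
  have erase_ab : ({{a, b}, {c, d}} : Finset (Finset ℕ)).erase {a, b} = {{c, d}} :=
    Finset.erase_insert (by simpa using hne)
  simp only [blockQuad, h, sup_pairs, fmin_union, block_a, erase_ab, Finset.card_pair hne,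
    Finset.sup_singleton, id, fmin_pair, fmax_pair, hab, hcd, OfNat.ofNat_ne_one, if_false]

lemma isCore_coreOfArcs (h : IsArcCode n (a, b, c, d)) : IsCore n (coreOfArcs (a, b, c, d)) := by
  obtain ⟨ha, hab, hac, hb, hd, hcase⟩ := h
  rw [coreOfArcs]
  split_ifs with hcd
  · have := card_triple hac (show c < b by lia)
    exact ⟨by grind, by grind, by simp⟩
  · have := Finset.card_pair hab.ne
    have := Finset.card_pair hcd
    have disjoint : Disjoint ({a, b} : Finset ℕ) {c, d} := Finset.disjoint_left.2 (by grind)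
    refine ⟨by grind, by grind, ?_⟩
    rw [Finset.coe_pair]
    exact Set.pairwise_pair_of_symm.2 fun _ => disjoint

lemma sum_card_coreOfArcs (h : IsArcCode n (a, b, c, d)) :
    ∑ β ∈ coreOfArcs (a, b, c, d), (β.card - 1) = 2 := by
  obtain ⟨-, hab, hac, -, -, hcase⟩ := h
  rw [coreOfArcs]
  split_ifs with hcd
  · rw [Finset.sum_singleton, card_triple hac (by lia)]
  · rw [Finset.sum_pair (pair_ne_pair hab hac (by lia)), Finset.card_pair hab.ne,
      Finset.card_pair hcd]

lemma isNoncrossing_coreOfArcs (h : IsArcCode n (a, b, c, d)) :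
    IsNoncrossing (coreOfArcs (a, b, c, d)) := by
  obtain ⟨-, hab, hac, -, -, hcase⟩ := h
  intro p q r s hpq hqr hrs β hβ γ hγ hp hr hq hs
  rw [coreOfArcs] at hβ hγ
  split_ifs at hβ hγ with hcd
  · rw [Finset.mem_singleton.1 hβ, Finset.mem_singleton.1 hγ]
  · rw [Finset.mem_insert, Finset.mem_singleton] at hβ hγ
    rcases hβ with rfl | rfl <;> rcases hγ with rfl | rfl
    · rfl
    · simp only [Finset.mem_insert, Finset.mem_singleton] at hp hr hq hs
      lia
    · simp only [Finset.mem_insert, Finset.mem_singleton] at hp hr hq hs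
      lia
    · rfl

lemma skip_coreOfArcs (h : IsArcCode n (a, b, c, d)) :
    skip (coreOfArcs (a, b, c, d)) = arcSkip (a, b, c, d) := by
  obtain ⟨-, hab, hac, -, -, hcase⟩ := h
  rw [coreOfArcs, skip, arcSkip]
  split_ifs with hcd
  · have hcb : c < b := by lia
    rw [Finset.sum_singleton, fmin_triple hac hcb, fmax_triple hac hcb, card_triple hac hcb]
    lia
  · have hcd : c < d := by lia
    rw [Finset.sum_pair (pair_ne_pair hab hac hcd), fmin_pair hab, fmax_pair hab, fmin_pair hcd,
      fmax_pair hcd, Finset.card_pair hab.ne, Finset.card_pair hcd.ne]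
    lia

lemma blockQuad_addSingletons_coreOfArcs (h : IsArcCode n (a, b, c, d)) :
    blockQuad (addSingletons n (coreOfArcs (a, b, c, d))) =
      if c = d then (a, c, c, b) else (a, b, c, d) := by
  have hns := (isCore_coreOfArcs h).nsBlocks_addSingletons
  obtain ⟨-, hab, hac, -, -, hcase⟩ := h
  rw [coreOfArcs] at hns ⊢
  split_ifs at hns ⊢ with hcd
  · exact blockQuad_of_nsBlocks_eq_triple hac (by lia) hns
  · exact blockQuad_of_nsBlocks_eq_pairs hab hac (by lia) hns

lemma skew_addSingletons_coreOfArcs (h : IsArcCode n (a, b, c, d)) :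
    skew (addSingletons n (coreOfArcs (a, b, c, d))) = arcSkew (a, b, c, d) := by
  rw [skew, blockQuad_addSingletons_coreOfArcs h, arcSkew]
  simp only [IsArcCode] at h
  grind

lemma exists_pair_of_card_eq_two {β : Finset ℕ} (h : β.card = 2) : ∃ a b, a < b ∧ β = {a, b} := by
  obtain ⟨x, y, hne, rfl⟩ := Finset.card_eq_two.1 h
  rcases hne.lt_or_gt with hxy | hxy
  · exact ⟨x, y, hxy, rfl⟩
  · exact ⟨y, x, hxy, Finset.pair_comm x y⟩

lemma exists_triple_of_card_eq_three {β : Finset ℕ} (h : β.card = 3) :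
    ∃ a b c, a < b ∧ b < c ∧ β = {a, b, c} := by
  obtain ⟨a, b, c, hsort⟩ := List.length_eq_three.1 ((β.length_sort (· ≤ ·)).trans h)
  have sorted : [a, b, c].SortedLT := hsort ▸ β.sortedLT_sort
  have toFinset : [a, b, c].toFinset = β := hsort ▸ β.sort_toFinset (· ≤ ·)
  have := sorted.pairwise
  exact ⟨a, b, c, by grind, by grind, by simp [← toFinset]⟩

lemma IsCore.exists_coreOfArcs_eq_pairs (h : IsCore n {{a, b}, {c, d}})
    (hnc : IsNoncrossing {{a, b}, {c, d}}) (hab : a < b) (hcd : c < d) (hac : a < c) :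
    ∃ x, IsArcCode n x ∧ coreOfArcs x = {{a, b}, {c, d}} := by
  have hne := pair_ne_pair hab hac hcd
  have bounds_ab := h.subset_Icc {a, b} (by simp)
  have bounds_cd := h.subset_Icc {c, d} (by simp)
  have disjoint : Disjoint ({a, b} : Finset ℕ) {c, d} :=
    h.pairwiseDisjoint (by simp) (by simp) hne
  have not_crossing : ¬ (c < b ∧ b < d) := fun ⟨hcb, hbd⟩ =>
    hne (hnc a c b d hac hcb hbd _ (by simp) _ (by simp) (by simp) (by simp) (by simp) (by simp))
  refine ⟨(a, b, c, d), ?_, if_neg hcd.ne⟩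
  simp only [Finset.insert_subset_iff, Finset.mem_Icc, Finset.singleton_subset_iff,
    Finset.disjoint_insert_right, Finset.mem_insert, Finset.mem_singleton, not_or,
    Finset.disjoint_singleton_right] at bounds_ab bounds_cd disjoint
  simp only [IsArcCode]
  lia

lemma IsCore.exists_coreOfArcs_eq {F : Finset (Finset ℕ)} (h : IsCore n F) (hnc : IsNoncrossing F)
    (hsum : ∑ β ∈ F, (β.card - 1) = 2) : ∃ x, IsArcCode n x ∧ coreOfArcs x = F := by
  rcases exists_triple_or_pairs_of_sum_eq_two h.two_le_card hsum with
    ⟨β, rfl, hβ⟩ | ⟨β, γ, hne, rfl, hβ, hγ⟩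
  · obtain ⟨a, b, c, hab, hbc, rfl⟩ := exists_triple_of_card_eq_three hβ
    have bounds := h.subset_Icc {a, b, c} (by simp)
    refine ⟨(a, c, b, b), ?_, if_pos rfl⟩
    simp only [Finset.insert_subset_iff, Finset.mem_Icc, Finset.singleton_subset_iff] at bounds
    simp only [IsArcCode]
    lia
  · obtain ⟨a, b, hab, rfl⟩ := exists_pair_of_card_eq_two hβ
    obtain ⟨c, d, hcd, rfl⟩ := exists_pair_of_card_eq_two hγ
    have hac : a ≠ c := by
      rintro rfl
      have disjoint : Disjoint ({a, b} : Finset ℕ) {a, d} :=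
        h.pairwiseDisjoint (by simp) (by simp) hne
      simp at disjoint
    rcases hac.lt_or_gt with hac | hca
    · exact h.exists_coreOfArcs_eq_pairs hnc hab hcd hac
    · rw [Finset.pair_comm] at h hnc ⊢
      exact h.exists_coreOfArcs_eq_pairs hnc hcd hab hca

/-- Noncrossing partitions in `NC n 3` are equivalent to their codes. -/
noncomputable def arcCodeEquiv (hn : 3 ≤ n) : {x // IsArcCode n x} ≃ NC n 3 :=
  Equiv.ofBijective
    (fun x => ⟨(isCore_coreOfArcs x.2).setPartition,
      isNoncrossing_addSingletons_iff.2 (isNoncrossing_coreOfArcs x.2), by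
        have := (isCore_coreOfArcs x.2).card_addSingletons_add
        rw [sum_card_coreOfArcs x.2] at this
        simp only [IsCore.setPartition]
        lia⟩) <| by
    constructor
    · intro x y hxy
      have hquad : blockQuad (addSingletons n (coreOfArcs x)) =
          blockQuad (addSingletons n (coreOfArcs y)) :=
        congrArg (fun π : NC n 3 => blockQuad π.1.blocks) hxy
      have hx := x.2
      have hy := y.2
      rw [blockQuad_addSingletons_coreOfArcs hx, blockQuad_addSingletons_coreOfArcs hy] at hquad
      simp only [IsArcCode] at hx hy
      grind
    · rintro ⟨P, hnc, hcard⟩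
      have sum_eq_two := P.isCore_nsBlocks.card_addSingletons_add
      rw [P.addSingletons_nsBlocks] at sum_eq_two
      rw [← P.addSingletons_nsBlocks, isNoncrossing_addSingletons_iff] at hnc
      obtain ⟨x, hx, hcore⟩ := P.isCore_nsBlocks.exists_coreOfArcs_eq hnc (by lia)
      refine ⟨⟨x, hx⟩, Subtype.ext (SetPartition.blocks_injective ?_)⟩
      exact (congrArg (addSingletons n) hcore).trans P.addSingletons_nsBlocks

lemma skip_arcCodeEquiv (hn : 3 ≤ n) (x : {x // IsArcCode n x}) :
    skip (arcCodeEquiv hn x).1.blocks = arcSkip x :=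
  (isCore_coreOfArcs x.2).skip_addSingletons.trans (skip_coreOfArcs x.2)

lemma skew_arcCodeEquiv (hn : 3 ≤ n) (x : {x // IsArcCode n x}) :
    skew (arcCodeEquiv hn x).1.blocks = arcSkew x :=
  skew_addSingletons_coreOfArcs x.2

end ArcCodes

section Bijection

variable {m s t j : ℕ}

/-- The range of the indices of the exceptional class of codes: both the polyomino codes with
`y₃ ≠ 0` and either `y₂ = 0` and `x₂ < x₁ + y₃`, or `0 ≠ y₂ = y₃`, and the arc codes with
`a = 1` and `c ≠ 2` are indexed by these triples. Here `s` is the bounce or skew statistic and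
`t + j` the area or skip statistic. -/
def IsExceptionalIndex (m s t j : ℕ) : Prop :=
  1 ≤ s ∧ s + j ≤ m ∧ t + 1 < s + j

/-- The exceptional arc code with a given index. -/
def exceptionalArcs (s t j : ℕ) : ℕ × ℕ × ℕ × ℕ :=
  if t + 1 < s then (1, t + 2, s + 1, s + 2 + j) else (1, s + 2 + j, s + 2, t + 3)

/-- The exceptional polyomino code with a given index. -/
def exceptionalPolyomino (m s t j : ℕ) : ℕ × ℕ × ℕ × ℕ :=
  if t < j then (j + 1, m + 1 - s, 0, m - s - t)
  else (m + 2 - s, m + 2 - s + (t - j), m + 1 - s - j, m + 1 - s - j)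

/-- The bijection from polyomino codes to arc codes. The third case is the exceptional class. -/
def toArcs (m : ℕ) : ℕ × ℕ × ℕ × ℕ → ℕ × ℕ × ℕ × ℕ
  | (x₁, x₂, y₂, y₃) =>
    if y₃ = 0 then (1, x₂ + 2, 2, x₁ + 1)
    else if y₂ = 0 ∧ x₁ + y₃ ≤ x₂ then (m + 2 - x₂, m + 3 - y₃, m + 3 - x₂, m + 2 + x₁ - x₂)
    else if y₂ = 0 ∨ y₂ = y₃ then
      exceptionalArcs (if y₂ = 0 then m + 1 - x₂ else m + 2 - x₁) (x₂ - 1 - y₃) (x₁ - 1 - y₂)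
    else if y₃ < x₁ then (m + 2 - x₂, m + 3 - y₂, m + 4 - x₁, m + 3 - y₃)
    else (m + 2 - x₂, m + 2 - y₃, m + 3 - x₁, m + 3 - y₂)

/-- The inverse of `toArcs m`. The second case is the exceptional class. -/
def ofArcs (m : ℕ) : ℕ × ℕ × ℕ × ℕ → ℕ × ℕ × ℕ × ℕ
  | (a, b, c, d) =>
    if c = 2 then (d - 1, b - 2, 0, 0)
    else if a = 1 then
      if b < c then exceptionalPolyomino m (c - 1) (b - 2) (d - c - 1)
      else exceptionalPolyomino m (c - 2) (d - 3) (b - c)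
    else if b < c then (m + 3 - c, m + 2 - a, m + 3 - d, m + 2 - b)
    else if a + 1 = c then (d + 1 - c, m + 3 - c, 0, m + 3 - b)
    else (m + 4 - c, m + 2 - a, m + 3 - b, m + 3 - d)

lemma isArcCode_exceptionalArcs (h : IsExceptionalIndex m s t j) :
    IsArcCode (m + 2) (exceptionalArcs s t j) := by
  simp only [IsExceptionalIndex] at h
  rw [exceptionalArcs]
  split_ifs <;> simp only [IsArcCode] <;> lia

lemma isPolyominoCode_exceptionalPolyomino (h : IsExceptionalIndex m s t j) :
    IsPolyominoCode m (exceptionalPolyomino m s t j) := by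
  simp only [IsExceptionalIndex] at h
  rw [exceptionalPolyomino]
  split_ifs <;> simp only [IsPolyominoCode] <;> lia

lemma arcSkip_exceptionalArcs (h : IsExceptionalIndex m s t j) :
    arcSkip (exceptionalArcs s t j) = t + j := by
  simp only [IsExceptionalIndex] at h
  rw [exceptionalArcs]
  split_ifs <;> simp only [arcSkip] <;> lia

lemma codeArea_exceptionalPolyomino (h : IsExceptionalIndex m s t j) :
    codeArea (exceptionalPolyomino m s t j) = t + j := by
  simp only [IsExceptionalIndex] at h
  rw [exceptionalPolyomino]
  split_ifs <;> simp only [codeArea] <;> lia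

lemma arcSkew_exceptionalArcs : arcSkew (exceptionalArcs s t j) = s := by
  rw [exceptionalArcs]
  split_ifs <;> simp only [arcSkew] <;> split_ifs <;> lia

lemma codeBounce_exceptionalPolyomino (h : IsExceptionalIndex m s t j) :
    codeBounce m (exceptionalPolyomino m s t j) = s := by
  simp only [IsExceptionalIndex] at h
  rw [exceptionalPolyomino]
  split_ifs <;> simp only [codeBounce] <;> split_ifs <;> lia

lemma toArcs_exceptionalPolyomino (h : IsExceptionalIndex m s t j) :
    toArcs m (exceptionalPolyomino m s t j) = exceptionalArcs s t j := by
  simp only [IsExceptionalIndex] at h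
  rw [exceptionalPolyomino]
  split_ifs with htj
  · rw [toArcs, if_neg (by lia), if_neg (by lia), if_pos (by lia), if_pos rfl]
    congr 1 <;> lia
  · rw [toArcs, if_neg (by lia), if_neg (by lia), if_pos (by lia), if_neg (by lia)]
    congr 1 <;> lia

lemma ofArcs_exceptionalArcs (h : IsExceptionalIndex m s t j) :
    ofArcs m (exceptionalArcs s t j) = exceptionalPolyomino m s t j := by
  simp only [IsExceptionalIndex] at h
  rw [exceptionalArcs]
  split_ifs with hts
  · rw [ofArcs, if_neg (by lia), if_pos rfl, if_pos (by lia)]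
    congr 1; lia
  · rw [ofArcs, if_neg (by lia), if_pos rfl, if_neg (by lia)]
    congr 1; lia

lemma IsPolyominoCode.exists_exceptionalPolyomino_eq {x₁ x₂ y₂ y₃ : ℕ}
    (h : IsPolyominoCode m (x₁, x₂, y₂, y₃)) (hy₃ : y₃ ≠ 0) (hx : ¬(y₂ = 0 ∧ x₁ + y₃ ≤ x₂))
    (hy : y₂ = 0 ∨ y₂ = y₃) :
    ∃ s t j, IsExceptionalIndex m s t j ∧ exceptionalPolyomino m s t j = (x₁, x₂, y₂, y₃) := by
  simp only [IsPolyominoCode] at h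
  by_cases hy₂ : y₂ = 0
  · refine ⟨m + 1 - x₂, x₂ - 1 - y₃, x₁ - 1, by rw [IsExceptionalIndex]; lia, ?_⟩
    rw [exceptionalPolyomino, if_pos (by lia)]
    simp only [Prod.mk.injEq]
    lia
  · refine ⟨m + 2 - x₁, x₂ - 1 - y₃, x₁ - 1 - y₂, by rw [IsExceptionalIndex]; lia, ?_⟩
    rw [exceptionalPolyomino, if_neg (by lia)]
    simp only [Prod.mk.injEq]
    lia

lemma IsArcCode.exists_exceptionalArcs_eq {b c d : ℕ} (h : IsArcCode (m + 2) (1, b, c, d))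
    (hc : c ≠ 2) : ∃ s t j, IsExceptionalIndex m s t j ∧ exceptionalArcs s t j = (1, b, c, d) := by
  simp only [IsArcCode] at h
  by_cases hbc : b < c
  · refine ⟨c - 1, b - 2, d - c - 1, by rw [IsExceptionalIndex]; lia, ?_⟩
    rw [exceptionalArcs, if_pos (by lia)]
    simp only [Prod.mk.injEq]
    lia
  · refine ⟨c - 2, d - 3, b - c, by rw [IsExceptionalIndex]; lia, ?_⟩
    rw [exceptionalArcs, if_neg (by lia)]
    simp only [Prod.mk.injEq]
    lia

lemma toArcs_spec {p : ℕ × ℕ × ℕ × ℕ} (h : IsPolyominoCode m p) :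
    IsArcCode (m + 2) (toArcs m p) ∧ arcSkip (toArcs m p) = codeArea p ∧
      arcSkew (toArcs m p) = codeBounce m p ∧ ofArcs m (toArcs m p) = p := by
  obtain ⟨x₁, x₂, y₂, y₃⟩ := p
  by_cases hexc : y₃ ≠ 0 ∧ ¬(y₂ = 0 ∧ x₁ + y₃ ≤ x₂) ∧ (y₂ = 0 ∨ y₂ = y₃)
  · obtain ⟨s, t, j, hi, hp⟩ := h.exists_exceptionalPolyomino_eq hexc.1 hexc.2.1 hexc.2.2
    rw [← hp, toArcs_exceptionalPolyomino hi, arcSkip_exceptionalArcs hi, arcSkew_exceptionalArcs,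
      codeArea_exceptionalPolyomino hi, codeBounce_exceptionalPolyomino hi,
      ofArcs_exceptionalArcs hi]
    exact ⟨isArcCode_exceptionalArcs hi, rfl, rfl, rfl⟩
  · simp only [IsPolyominoCode] at h
    rw [toArcs]
    refine ⟨?_, ?_, ?_, ?_⟩
    · split_ifs <;> first | lia | simp only [IsArcCode]; lia
    · split_ifs <;> first | lia | simp only [arcSkip, codeArea]; lia
    · split_ifs <;> first | lia | simp only [arcSkew, codeBounce]; split_ifs <;> lia
    · split_ifs <;> first | lia | simp only [ofArcs]; split_ifs <;> grind

lemma ofArcs_spec {x : ℕ × ℕ × ℕ × ℕ} (h : IsArcCode (m + 2) x) :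
    IsPolyominoCode m (ofArcs m x) ∧ toArcs m (ofArcs m x) = x := by
  obtain ⟨a, b, c, d⟩ := x
  by_cases hexc : a = 1 ∧ c ≠ 2
  · obtain ⟨rfl, hc⟩ := hexc
    obtain ⟨s, t, j, hi, hx⟩ := h.exists_exceptionalArcs_eq hc
    rw [← hx, ofArcs_exceptionalArcs hi]
    exact ⟨isPolyominoCode_exceptionalPolyomino hi, toArcs_exceptionalPolyomino hi⟩
  · simp only [IsArcCode] at h
    rw [ofArcs]
    constructor
    · split_ifs <;> first | lia | simp only [IsPolyominoCode]; lia
    · split_ifs <;> first | lia | simp only [toArcs]; split_ifs <;> grind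

/-- The bijection between polyomino codes and arc codes, which carries area to skip and bounce
to skew. -/
def codeEquiv (m : ℕ) : {p // IsPolyominoCode m p} ≃ {x // IsArcCode (m + 2) x} where
  toFun p := ⟨toArcs m p, (toArcs_spec p.2).1⟩
  invFun x := ⟨ofArcs m x, (ofArcs_spec x.2).1⟩
  left_inv p := Subtype.ext (toArcs_spec p.2).2.2.2
  right_inv x := Subtype.ext (ofArcs_spec x.2).2

lemma exists_equiv_polyomino {n : ℕ} (hn : 3 ≤ n) : ∃ e : NC n 3 ≃ Polyomino (n - 2) 3,
    ∀ π, area (e π) = skip π.1.blocks ∧ bounce (e π) = skew π.1.blocks := by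
  obtain ⟨m, rfl⟩ : ∃ m, n = m + 2 := ⟨n - 2, by lia⟩
  refine ⟨(arcCodeEquiv hn).symm.trans ((codeEquiv m).symm.trans (polyominoCodeEquiv m)), ?_⟩
  suffices h : ∀ p,
      area (polyominoCodeEquiv m p) = skip (arcCodeEquiv hn (codeEquiv m p)).1.blocks ∧
      bounce (polyominoCodeEquiv m p) = skew (arcCodeEquiv hn (codeEquiv m p)).1.blocks by
    intro π
    simpa using h ((codeEquiv m).symm ((arcCodeEquiv hn).symm π))
  intro p
  obtain ⟨-, area_eq, bounce_eq, -⟩ := toArcs_spec p.2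
  rw [skip_arcCodeEquiv, skew_arcCodeEquiv, (hasCode_polyominoCodeEquiv p).area_eq,
    (hasCode_polyominoCodeEquiv p).bounce_eq]
  exact ⟨area_eq.symm, bounce_eq.symm⟩

end Bijection

/-- The pair (skip, skew) is a combinatorial interpretation of `N_{n,3}(q,t)`:
for all `n ≥ 3` and `u v`, the number of `π ∈ NC(n,3)` with `skip π = u` and
`skew π = v` equals the number of `P ∈ PP(n-2,3)` with `area P = u`, `bounce P = v`. -/
theorem skip_skew_pair (n u v : ℕ) (hn : 3 ≤ n) :
    Nat.card {π : NC n 3 // skip π.val.blocks = u ∧ skew π.val.blocks = v} =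
    Nat.card {P : Polyomino (n - 2) 3 // area P = u ∧ bounce P = v} := by
  obtain ⟨e, he⟩ := exists_equiv_polyomino hn
  refine Nat.card_congr (e.subtypeEquiv fun π => ?_)
  rw [(he π).1, (he π).2]

end QtN
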